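/- (Lerner–Ombrosi–Rivera-Ríos key lemma.) Let 0 < η < 1, let S be an η-sparse family of standard dyadic cubes in ℝ^d, and let b be a real-valued locally integrable function on ℝ^d. Then there exists an η/(2(1+η))-sparse family S̃ of standard dyadic cubes with S ⊆ S̃ such that for every Q ∈ S̃ and almost every x ∈ Q, |b(x) − ⟨b⟩_Q| ≤ 2^{d+2} · ∑_{R∈S̃, R⊆Q} Ω(b;R) · 1_R(x), where Ω(b;R) := (1/|R|)∫_R |b − ⟨b⟩_R|. -/

import Mathlib

open MeasureTheory ENNReal

noncomputable section

/-- The standard dyadic cube of generation `j` indexed by `k ∈ ℤ^d`. -/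
def dyadicCube (d : ℕ) (j : ℤ) (k : Fin d → ℤ) : Set (Fin d → ℝ) :=
  {x | ∀ i, (k i : ℝ) * (2:ℝ) ^ (-j) ≤ x i ∧ x i < ((k i : ℝ) + 1) * (2:ℝ) ^ (-j)}

/-- The standard dyadic cube with parameter pair `q = (j, k)`. -/
def dCube (d : ℕ) (q : ℤ × (Fin d → ℤ)) : Set (Fin d → ℝ) := dyadicCube d q.1 q.2

/-- A family `S` of standard dyadic cubes (given by parameters) is `η`-sparse if there are
pairwise disjoint measurable sets `E_Q ⊆ Q`, `Q ∈ S`, with `|E_Q| ≥ η |Q|`. -/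
def IsSparse (d : ℕ) (η : ℝ) (S : Set (ℤ × (Fin d → ℤ))) : Prop :=
  ∃ E : {q // q ∈ S} → Set (Fin d → ℝ),
    (∀ q, MeasurableSet (E q)) ∧ (∀ q, E q ⊆ dCube d q.1) ∧
    (∀ q r, q ≠ r → Disjoint (E q) (E r)) ∧
    (∀ q, ENNReal.ofReal η * volume (dCube d q.1) ≤ volume (E q))

/-- The average of `f` over the set `Q` (with respect to Lebesgue measure). -/
def avg {d : ℕ} (Q : Set (Fin d → ℝ)) (f : (Fin d → ℝ) → ℝ) : ℝ :=
  (volume Q).toReal⁻¹ * ∫ x in Q, f x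

section DyadicCubes

variable {d : ℕ}

lemma mem_dCube_iff {q : ℤ × (Fin d → ℤ)} {x : Fin d → ℝ} :
    x ∈ dCube d q ↔ ∀ i, ⌊x i * (2 : ℝ) ^ q.1⌋ = q.2 i := by
  have h2 : (0 : ℝ) < (2 : ℝ) ^ q.1 := by positivity
  simp only [dCube, dyadicCube, Set.mem_ofPred_eq, Int.floor_eq_iff, zpow_neg,
    ← div_eq_mul_inv, div_le_iff₀ h2, lt_div_iff₀ h2]

/-- The index of the dyadic cube of generation `j` containing `x`. -/
def cubeAt (x : Fin d → ℝ) (j : ℤ) : ℤ × (Fin d → ℤ) := (j, fun i => ⌊x i * (2 : ℝ) ^ j⌋)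

lemma mem_cubeAt (x : Fin d → ℝ) (j : ℤ) : x ∈ dCube d (cubeAt x j) :=
  mem_dCube_iff.2 fun _ => rfl

lemma floor_mul_two_zpow (t : ℝ) {j l : ℤ} (h : l ≤ j) :
    ⌊t * (2 : ℝ) ^ l⌋ = ⌊t * (2 : ℝ) ^ j⌋ / ((2 ^ (j - l).toNat : ℕ) : ℤ) := by
  rw [← Int.floor_div_natCast]
  congr 1
  have hj : (2 : ℝ) ^ j = (2 : ℝ) ^ l * (2 : ℝ) ^ (j - l).toNat := by
    rw [← zpow_natCast, Int.toNat_of_nonneg (by lia), ← zpow_add₀ two_ne_zero]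
    congr 1; ring
  push_cast
  rw [hj]
  field_simp

lemma dCube_subset_of_mem {q r : ℤ × (Fin d → ℤ)} {x : Fin d → ℝ} (hq : x ∈ dCube d q)
    (hr : x ∈ dCube d r) (h : r.1 ≤ q.1) : dCube d q ⊆ dCube d r := by
  intro y hy
  rw [mem_dCube_iff] at *
  intro i
  rw [← hr i, floor_mul_two_zpow _ h, floor_mul_two_zpow _ h, hq, hy]

lemma dCube_subset_or_subset {q r : ℤ × (Fin d → ℤ)} {x : Fin d → ℝ} (hq : x ∈ dCube d q)
    (hr : x ∈ dCube d r) : dCube d q ⊆ dCube d r ∨ dCube d r ⊆ dCube d q :=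
  (le_total r.1 q.1).imp (dCube_subset_of_mem hq hr) (dCube_subset_of_mem hr hq)

lemma dCube_nonempty (q : ℤ × (Fin d → ℤ)) : (dCube d q).Nonempty := by
  refine ⟨fun i => q.2 i * (2 : ℝ) ^ (-q.1), mem_dCube_iff.2 fun i => ?_⟩
  rw [mul_assoc, ← zpow_add₀ two_ne_zero]
  simp

lemma dCube_eq_pi (q : ℤ × (Fin d → ℤ)) :
    dCube d q = Set.univ.pi fun i =>
      Set.Ico ((q.2 i : ℝ) * (2 : ℝ) ^ (-q.1)) (((q.2 i : ℝ) + 1) * (2 : ℝ) ^ (-q.1)) := by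
  ext x
  simp [dCube, dyadicCube]

lemma measurableSet_dCube (q : ℤ × (Fin d → ℤ)) : MeasurableSet (dCube d q) := by
  rw [dCube_eq_pi]
  exact MeasurableSet.univ_pi fun _ => measurableSet_Ico

lemma volume_dCube (q : ℤ × (Fin d → ℤ)) :
    volume (dCube d q) = ENNReal.ofReal ((2 : ℝ) ^ (-q.1)) ^ d := by
  rw [dCube_eq_pi, Real.volume_pi_Ico]
  simp [add_mul]

lemma volume_dCube_ne_top (q : ℤ × (Fin d → ℤ)) : volume (dCube d q) ≠ ∞ := by
  rw [volume_dCube]; finiteness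

lemma volume_dCube_toReal (q : ℤ × (Fin d → ℤ)) :
    (volume (dCube d q)).toReal = ((2 : ℝ) ^ (-q.1)) ^ d := by
  rw [volume_dCube, ENNReal.toReal_pow, ENNReal.toReal_ofReal (by positivity)]

lemma volume_dCube_toReal_pos (q : ℤ × (Fin d → ℤ)) : 0 < (volume (dCube d q)).toReal := by
  rw [volume_dCube_toReal]; positivity

lemma generation_le_of_subset (hd : 1 ≤ d) {q r : ℤ × (Fin d → ℤ)}
    (h : dCube d q ⊆ dCube d r) : r.1 ≤ q.1 := by
  have hv := ENNReal.toReal_mono (volume_dCube_ne_top r) (measure_mono h)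
  rw [volume_dCube_toReal, volume_dCube_toReal,
    pow_le_pow_iff_left₀ (by positivity) (by positivity) (by lia),
    zpow_le_zpow_iff_right₀ _root_.one_lt_two] at hv
  lia

lemma dCube_injective (hd : 1 ≤ d) : Function.Injective (dCube d) := by
  intro q r h
  have h1 : q.1 = r.1 :=
    le_antisymm (generation_le_of_subset hd h.ge) (generation_le_of_subset hd h.le)
  obtain ⟨x, hx⟩ := dCube_nonempty q
  have hx' : x ∈ dCube d r := h ▸ hx
  rw [mem_dCube_iff] at hx hx'
  refine Prod.ext h1 (funext fun i => ?_)
  rw [← hx, ← hx', h1]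

lemma generation_lt_of_ssubset (hd : 1 ≤ d) {q r : ℤ × (Fin d → ℤ)}
    (h : dCube d q ⊂ dCube d r) : r.1 < q.1 := by
  refine lt_of_le_of_ne (generation_le_of_subset hd h.subset) fun he => ?_
  obtain ⟨x, hx⟩ := dCube_nonempty q
  exact h.not_subset (dCube_subset_of_mem (h.subset hx) hx he.ge)

lemma MeasureTheory.LocallyIntegrable.integrableOn_dCube {b : (Fin d → ℝ) → ℝ}
    (hb : LocallyIntegrable b volume) (q : ℤ × (Fin d → ℤ)) :
    IntegrableOn b (dCube d q) volume := by
  refine (hb.integrableOn_isCompact (k := Set.Icc _ _) isCompact_Icc).mono_set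
    (?_ : dCube d q ⊆ Set.Icc (fun i => (q.2 i : ℝ) * (2 : ℝ) ^ (-q.1))
      (fun i => ((q.2 i : ℝ) + 1) * (2 : ℝ) ^ (-q.1)))
  exact fun x hx => ⟨fun i => (hx i).1, fun i => (hx i).2.le⟩

/-- `R` is a maximal cube, with respect to inclusion, of the family `A`. -/
def IsMaxCube (A : Set (ℤ × (Fin d → ℤ))) (R : ℤ × (Fin d → ℤ)) : Prop :=
  R ∈ A ∧ ∀ R' ∈ A, dCube d R ⊆ dCube d R' → R' = R

lemma exists_isMaxCube_superset (hd : 1 ≤ d) {A : Set (ℤ × (Fin d → ℤ))} {m : ℤ}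
    (hA : ∀ R ∈ A, m ≤ R.1) {R : ℤ × (Fin d → ℤ)} (hR : R ∈ A) :
    ∃ M, IsMaxCube A M ∧ dCube d R ⊆ dCube d M := by
  obtain ⟨j, ⟨M, hMA, hRM, rfl⟩, hmin⟩ := Int.exists_least_of_bdd
    (P := fun j => ∃ M ∈ A, dCube d R ⊆ dCube d M ∧ M.1 = j)
    ⟨m, by rintro _ ⟨M, hM, -, rfl⟩; exact hA M hM⟩ ⟨R.1, R, hR, subset_rfl, rfl⟩
  refine ⟨M, ⟨hMA, fun R' hR' hMR' => ?_⟩, hRM⟩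
  obtain ⟨x, hx⟩ := dCube_nonempty M
  exact dCube_injective hd ((dCube_subset_of_mem (hMR' hx) hx
    (hmin _ ⟨R', hR', hRM.trans hMR', rfl⟩)).antisymm hMR')

lemma IsMaxCube.disjoint {A : Set (ℤ × (Fin d → ℤ))} {R R' : ℤ × (Fin d → ℤ)}
    (hR : IsMaxCube A R) (hR' : IsMaxCube A R') (hne : R ≠ R') :
    Disjoint (dCube d R) (dCube d R') := by
  refine Set.disjoint_left.2 fun x hx hx' => ?_
  rcases dCube_subset_or_subset hx hx' with h | h
  · exact hne (hR.2 R' hR'.1 h).symm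
  · exact hne (hR'.2 R hR.1 h)

end DyadicCubes

section Splitting

variable {d : ℕ}

/-- A set of finite Lebesgue measure contains an increasing family of subsets which realises every
intermediate value of the measure. -/
lemma exists_monotone_subsets_volume_eq (hd : 1 ≤ d) {X : Set (Fin d → ℝ)}
    (hX : MeasurableSet X) (hfin : volume X ≠ ∞) :
    ∃ U : ℝ≥0∞ → Set (Fin d → ℝ), Monotone U ∧ (∀ s, MeasurableSet (U s)) ∧ (∀ s, U s ⊆ X) ∧
      ∀ s ≤ volume X, volume (U s) = s := by
  have : Nonempty (Fin d) := ⟨⟨0, hd⟩⟩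
  set A : ℝ → Set (Fin d → ℝ) := fun r => X ∩ Metric.ball 0 r with hA
  have hAmono : Monotone A := fun r r' h =>
    Set.inter_subset_inter_right _ (Metric.ball_subset_ball h)
  set U : ℝ≥0∞ → Set (Fin d → ℝ) :=
    fun s => X ∩ ⋃ r ∈ {r : ℝ | volume (A r) ≤ s}, Metric.ball 0 r with hU
  refine ⟨U, fun s s' h => ?_, fun s => ?_, fun s => Set.inter_subset_left, fun s hs => ?_⟩
  · exact Set.inter_subset_inter_right _
      (Set.biUnion_subset_biUnion_left fun r (hr : _ ≤ _) => hr.trans h)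
  · exact hX.inter (isOpen_biUnion fun _ _ => Metric.isOpen_ball).measurableSet
  have hsup : ∀ t, (∀ r < t, volume (A r) ≤ s) → volume (A t) ≤ s := by
    intro t ht
    have hAt : A t = ⋃ n : ℕ, A (t - 1 / (n + 1)) := by
      refine Set.Subset.antisymm (fun x hx => ?_) (Set.iUnion_subset fun n => hAmono ?_)
      · have hx2 : ‖x‖ < t := by simpa using hx.2
        obtain ⟨n, hn⟩ := exists_nat_one_div_lt (sub_pos.2 hx2)
        refine Set.mem_iUnion.2 ⟨n, hx.1, ?_⟩
        simp only [Metric.mem_ball, dist_zero_right]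
        linarith
      · have : (0 : ℝ) < 1 / ((n : ℝ) + 1) := by positivity
        linarith
    rw [hAt, Monotone.measure_iUnion]
    · refine iSup_le fun n => ht _ ?_
      have : (0 : ℝ) < 1 / ((n : ℝ) + 1) := by positivity
      linarith
    · intro n m h
      exact hAmono (sub_le_sub_left (Nat.one_div_le_one_div h) _)
  by_cases hbdd : BddAbove {r : ℝ | volume (A r) ≤ s}
  · set t := sSup {r : ℝ | volume (A r) ≤ s} with ht
    have hne : {r : ℝ | volume (A r) ≤ s}.Nonempty := ⟨0, by simp [hA]⟩
    have hlt : ∀ r < t, volume (A r) ≤ s := by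
      intro r hr
      obtain ⟨r', hr', hrr'⟩ := exists_lt_of_lt_csSup hne hr
      exact (measure_mono (hAmono hrr'.le)).trans hr'
    have hUt : U s = A t := by
      refine congrArg (X ∩ ·) (Set.Subset.antisymm ?_ ?_)
      · exact Set.iUnion₂_subset fun r hr => Metric.ball_subset_ball (le_csSup hbdd hr)
      · intro x hx
        obtain ⟨r', hr', hrr'⟩ := exists_lt_of_lt_csSup hne (mem_ball_zero_iff.1 hx)
        exact Set.mem_biUnion hr' (mem_ball_zero_iff.2 hrr')
    rw [hUt]
    refine le_antisymm (hsup t hlt) ?_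
    have hclosed : volume (X ∩ Metric.closedBall 0 t) ≤ volume (A t) := by
      rw [← Metric.ball_union_sphere, Set.inter_union_distrib_left]
      refine (measure_union_le _ _).trans ?_
      rw [measure_mono_null Set.inter_subset_right (Measure.addHaar_sphere volume 0 t), add_zero]
    refine le_trans ?_ hclosed
    have hCt : X ∩ Metric.closedBall 0 t = ⋂ n : ℕ, A (t + 1 / (n + 1)) := by
      ext x
      simp only [hA, Set.mem_inter_iff, mem_closedBall_zero_iff, Set.mem_iInter,
        mem_ball_zero_iff]
      refine ⟨fun h n => ⟨h.1, h.2.trans_lt ?_⟩, fun h => ⟨(h 0).1, ?_⟩⟩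
      · have : (0 : ℝ) < 1 / ((n : ℝ) + 1) := by positivity
        linarith
      · refine le_of_forall_pos_le_add fun ε hε => ?_
        obtain ⟨n, hn⟩ := exists_nat_one_div_lt hε
        linarith [(h n).2]
    rw [hCt, Antitone.measure_iInter]
    · refine le_iInf fun n => ?_
      by_contra! hlt'
      have := le_csSup hbdd (show t + 1 / ((n : ℝ) + 1) ∈ {r : ℝ | volume (A r) ≤ s} from hlt'.le)
      have : (0 : ℝ) < 1 / ((n : ℝ) + 1) := by positivity
      linarith
    · intro n m h
      exact hAmono (by gcongr)
    · exact fun n => (hX.inter Metric.isOpen_ball.measurableSet).nullMeasurableSet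
    · exact ⟨0, measure_ne_top_of_subset Set.inter_subset_left hfin⟩
  · have hall : ∀ r, volume (A r) ≤ s := by
      intro r
      obtain ⟨r', hr', h⟩ := not_bddAbove_iff.1 hbdd r
      exact (measure_mono (hAmono h.le)).trans hr'
    have hUX : U s = ⋃ n : ℕ, A n := by
      refine Set.Subset.antisymm (fun x hx => ?_) (Set.iUnion_subset fun n x hx => ?_)
      · obtain ⟨n, hn⟩ := exists_nat_gt ‖x‖
        exact Set.mem_iUnion.2 ⟨n, hx.1, mem_ball_zero_iff.2 hn⟩
      · exact ⟨hx.1, Set.mem_biUnion (hall n) hx.2⟩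
    have hXU : U s = X := by
      refine Set.inter_eq_left.2 fun x _ => ?_
      exact Set.mem_biUnion (hall (‖x‖ + 1)) (mem_ball_zero_iff.2 (by linarith))
    refine le_antisymm ?_ (hXU ▸ hs)
    rw [hUX, Monotone.measure_iUnion fun n m h => hAmono (by exact_mod_cast h)]
    exact iSup_le fun n => hall n

/-- A set of finite Lebesgue measure can be split into pieces of prescribed measures. -/
lemma exists_disjoint_subsets_volume_eq (hd : 1 ≤ d) {ι : Type*} [Countable ι]
    {X : Set (Fin d → ℝ)} (hX : MeasurableSet X) (hfin : volume X ≠ ∞) (m : ι → ℝ≥0∞)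
    (hm : ∑' i, m i ≤ volume X) :
    ∃ Y : ι → Set (Fin d → ℝ), (∀ i, MeasurableSet (Y i)) ∧ (∀ i, Y i ⊆ X) ∧
      Pairwise (fun i j => Disjoint (Y i) (Y j)) ∧ ∀ i, volume (Y i) = m i := by
  obtain ⟨f, hf⟩ := exists_injective_nat ι
  obtain ⟨U, hUmono, hUmeas, hUX, hUvol⟩ := exists_monotone_subsets_volume_eq hd hX hfin
  set g : ℕ → ℝ≥0∞ := Function.extend f m 0 with hg
  have hgm : ∑' n, g n = ∑' i, m i := tsum_extend_zero hf m
  set s : ℕ → ℝ≥0∞ := fun n => ∑ k ∈ Finset.range n, g k with hs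
  have hsle : ∀ n, s n ≤ volume X := fun n =>
    (ENNReal.sum_le_tsum _).trans (hgm.le.trans hm)
  have hsmono : Monotone s := fun n k h =>
    Finset.sum_le_sum_of_subset (Finset.range_mono h)
  refine ⟨fun i => U (s (f i + 1)) \ U (s (f i)), fun i => (hUmeas _).diff (hUmeas _),
    fun i => Set.sdiff_subset.trans (hUX _), ?_, fun i => ?_⟩
  · have key : ∀ n k, n < k →
        Disjoint (U (s (n + 1)) \ U (s n)) (U (s (k + 1)) \ U (s k)) := fun n k h =>
      Set.disjoint_left.2 fun x hx hx' => hx'.2 (hUmono (hsmono h) hx.1)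
    intro i j hij
    rcases lt_or_gt_of_ne (hf.ne hij) with h | h
    · exact key _ _ h
    · exact (key _ _ h).symm
  · rw [measure_sdiff (hUmono (hsmono (Nat.le_succ _))) (hUmeas _).nullMeasurableSet
      (measure_ne_top_of_subset (hUX _) hfin), hUvol _ (hsle _), hUvol _ (hsle _)]
    have : s (f i + 1) = s (f i) + m i := by
      simp only [hs, Finset.sum_range_succ, hg, hf.extend_apply]
    rw [this, ENNReal.add_sub_cancel_left (ne_top_of_le_ne_top hfin (hsle _))]

/-- Given two countable disjoint families, there is a set which captures at least a proportion `c`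
of each member of the first one, and misses at least a proportion `c'` of each member of the second
one, where `c + c' = 1`. -/
lemma exists_measurableSet_proportion (hd : 1 ≤ d) {ι κ : Type*} [Countable ι] [Countable κ]
    {E : ι → Set (Fin d → ℝ)} {H : κ → Set (Fin d → ℝ)}
    (hE : ∀ i, MeasurableSet (E i)) (hH : ∀ k, MeasurableSet (H k))
    (hEfin : ∀ i, volume (E i) ≠ ∞)
    (hEd : Pairwise fun i j => Disjoint (E i) (E j))
    (hHd : Pairwise fun i j => Disjoint (H i) (H j)) {c c' : ℝ≥0∞} (hc : c + c' = 1) :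
    ∃ V : Set (Fin d → ℝ), MeasurableSet V ∧ (∀ k, c * volume (H k) ≤ volume (H k ∩ V)) ∧
      ∀ i, c' * volume (E i) ≤ volume (E i \ V) := by
  have hc1 : c ≤ 1 := hc ▸ le_self_add
  have hc1' : c' ≤ 1 := hc ▸ le_add_self
  have hfin : ∀ i k, volume (E i ∩ H k) ≠ ∞ := fun i k =>
    measure_ne_top_of_subset Set.inter_subset_left (hEfin i)
  have hsplit : ∀ i k, ∃ W : Set (Fin d → ℝ), MeasurableSet W ∧ W ⊆ E i ∩ H k ∧
      volume W = c * volume (E i ∩ H k) ∧ volume ((E i ∩ H k) \ W) = c' * volume (E i ∩ H k) := by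
    intro i k
    obtain ⟨U, -, hUm, hUX, hUv⟩ :=
      exists_monotone_subsets_volume_eq hd ((hE i).inter (hH k)) (hfin i k)
    have hv := hUv (c * volume (E i ∩ H k)) (mul_le_of_le_one_left' hc1)
    refine ⟨_, hUm _, hUX _, hv, ?_⟩
    rw [measure_sdiff (hUX _) (hUm _).nullMeasurableSet
      (measure_ne_top_of_subset (hUX _) (hfin i k)), hv]
    refine ENNReal.sub_eq_of_eq_add (ENNReal.mul_ne_top (ne_top_of_le_ne_top one_ne_top hc1) (hfin i k)) ?_
    rw [← add_mul, add_comm, hc, one_mul]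
  choose W hWm hWsub hWv hWv' using hsplit
  have hout : MeasurableSet ((⋃ k, H k) \ ⋃ i, E i) :=
    (MeasurableSet.iUnion hH).diff (MeasurableSet.iUnion hE)
  set V : Set (Fin d → ℝ) := ((⋃ k, H k) \ ⋃ i, E i) ∪ ⋃ i, ⋃ k, W i k with hV
  refine ⟨V, hout.union (.iUnion fun i => .iUnion fun k => hWm i k), fun k => ?_, fun i => ?_⟩
  · have hsub : (H k \ ⋃ i, E i) ∪ ⋃ i, W i k ⊆ H k ∩ V := by
      rintro x (hx | hx)
      · exact ⟨hx.1, Or.inl ⟨Set.mem_iUnion.2 ⟨k, hx.1⟩, hx.2⟩⟩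
      · obtain ⟨i, hi⟩ := Set.mem_iUnion.1 hx
        exact ⟨(hWsub i k hi).2, Or.inr (Set.mem_iUnion₂.2 ⟨i, k, hi⟩)⟩
    refine le_trans ?_ (measure_mono hsub)
    rw [measure_union _ (.iUnion fun i => hWm i k), measure_iUnion _ fun i => hWm i k]
    · calc c * volume (H k)
          ≤ c * (volume (H k \ ⋃ i, E i) + ∑' i, volume (E i ∩ H k)) := by
            gcongr
            refine (measure_mono (t := (H k \ ⋃ i, E i) ∪ ⋃ i, E i ∩ H k) fun x hx => ?_).trans
              ((measure_union_le _ _).trans (by gcongr; exact measure_iUnion_le _))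
            by_cases h : x ∈ ⋃ i, E i
            · obtain ⟨i, hi⟩ := Set.mem_iUnion.1 h
              exact Or.inr (Set.mem_iUnion.2 ⟨i, hi, hx⟩)
            · exact Or.inl ⟨hx, h⟩
        _ ≤ _ := by
            rw [mul_add, ← ENNReal.tsum_mul_left]
            simp only [hWv]
            gcongr
            exact mul_le_of_le_one_left' hc1
    · exact fun i j hij => (hEd hij).mono (fun x hx => (hWsub i k hx).1)
        fun x hx => (hWsub j k hx).1
    · refine Set.disjoint_left.2 fun x hx hx' => ?_
      obtain ⟨i, hi⟩ := Set.mem_iUnion.1 hx'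
      exact hx.2 (Set.mem_iUnion.2 ⟨i, (hWsub i k hi).1⟩)
  · have hsub : (E i \ ⋃ k, H k) ∪ ⋃ k, (E i ∩ H k) \ W i k ⊆ E i \ V := by
      rintro x (hx | hx)
      · refine ⟨hx.1, ?_⟩
        rintro (h | h)
        · exact hx.2 h.1
        · obtain ⟨j, k, hjk⟩ := Set.mem_iUnion₂.1 h
          exact hx.2 (Set.mem_iUnion.2 ⟨k, (hWsub j k hjk).2⟩)
      · obtain ⟨k, ⟨hxE, hxH⟩, hxW⟩ := Set.mem_iUnion.1 hx
        refine ⟨hxE, ?_⟩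
        rintro (h | h)
        · exact h.2 (Set.mem_iUnion.2 ⟨i, hxE⟩)
        · obtain ⟨j, l, hjl⟩ := Set.mem_iUnion₂.1 h
          have hj : i = j := by
            by_contra hne
            exact Set.disjoint_left.1 (hEd hne) hxE (hWsub j l hjl).1
          have hl : k = l := by
            by_contra hne
            exact Set.disjoint_left.1 (hHd hne) hxH (hWsub j l hjl).2
          exact hxW (hj ▸ hl ▸ hjl)
    have hmeas : ∀ k, MeasurableSet ((E i ∩ H k) \ W i k) := fun k =>
      ((hE i).inter (hH k)).diff (hWm i k)
    refine le_trans ?_ (measure_mono hsub)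
    rw [measure_union _ (.iUnion hmeas), measure_iUnion _ hmeas]
    · calc c' * volume (E i)
          ≤ c' * (volume (E i \ ⋃ k, H k) + ∑' k, volume (E i ∩ H k)) := by
            gcongr
            refine (measure_mono (t := (E i \ ⋃ k, H k) ∪ ⋃ k, E i ∩ H k) fun x hx => ?_).trans
              ((measure_union_le _ _).trans (by gcongr; exact measure_iUnion_le _))
            by_cases h : x ∈ ⋃ k, H k
            · obtain ⟨k, hk⟩ := Set.mem_iUnion.1 h
              exact Or.inr (Set.mem_iUnion.2 ⟨k, hx, hk⟩)
            · exact Or.inl ⟨hx, h⟩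
        _ ≤ _ := by
            rw [mul_add, ← ENNReal.tsum_mul_left]
            simp only [hWv']
            gcongr
            exact mul_le_of_le_one_left' hc1'
    · exact fun k l hkl => (hHd hkl).mono (fun x hx => hx.1.2) fun x hx => hx.1.2
    · refine Set.disjoint_left.2 fun x hx hx' => ?_
      obtain ⟨k, hk⟩ := Set.mem_iUnion.1 hx'
      exact hx.2 (Set.mem_iUnion.2 ⟨k, hk.1.2⟩)

end Splitting

section Sparse

variable {d : ℕ}

/-- Let `S` be `η`-sparse and let each `P ∈ S'` carry a set `G P ⊆ P` filling at least half of `P`.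
If every cube of `S'` strictly inside `P` lies in a cube `R` strictly inside `P` which is either
a member of `S` or disjoint from `G P`, then `S'` is `η / (2 * (1 + η))`-sparse. -/
lemma IsSparse.of_nested (hd : 1 ≤ d) {η : ℝ} (hη : 0 < η) {S S' : Set (ℤ × (Fin d → ℤ))}
    (hS : IsSparse d η S) {G : ℤ × (Fin d → ℤ) → Set (Fin d → ℝ)}
    (hGm : ∀ P, MeasurableSet (G P)) (hGsub : ∀ P, G P ⊆ dCube d P)
    (hGv : ∀ P, volume (dCube d P) ≤ 2 * volume (G P))
    (hnest : ∀ P ∈ S', ∀ P' ∈ S', dCube d P' ⊂ dCube d P → ∃ R,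
      dCube d P' ⊆ dCube d R ∧ dCube d R ⊂ dCube d P ∧ (R ∈ S ∨ Disjoint (dCube d R) (G P))) :
    IsSparse d (η / (2 * (1 + η))) S' := by
  obtain ⟨E, hEm, hEsub, hEd, hEv⟩ := hS
  set A : ℤ × (Fin d → ℤ) → Set (ℤ × (Fin d → ℤ)) :=
    fun P => {R | R ∈ S ∧ dCube d R ⊂ dCube d P} with hA
  set H : {P // P ∈ S'} → Set (Fin d → ℝ) := fun P => G P \ ⋃ R ∈ A P, dCube d R with hH
  have hHm : ∀ P, MeasurableSet (H P) := fun P =>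
    (hGm _).diff (.biUnion (Set.to_countable _) fun R _ => measurableSet_dCube R)
  have disjoint_of_ssubset : ∀ P P' : {P // P ∈ S'}, dCube d P'.1 ⊂ dCube d P.1 →
      Disjoint (H P) (H P') := by
    intro P P' h
    obtain ⟨R, hP'R, hRP, hR⟩ := hnest P P.2 P' P'.2 h
    refine Set.disjoint_left.2 fun x hx hx' => ?_
    have hxR : x ∈ dCube d R := hP'R (hGsub _ hx'.1)
    rcases hR with hR | hR
    · exact hx.2 (Set.mem_biUnion (show R ∈ A P from ⟨hR, hRP⟩) hxR)
    · exact Set.disjoint_left.1 hR hxR hx.1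
  have ssubset_or : ∀ P P' : {P // P ∈ S'}, P ≠ P' → ∀ x ∈ dCube d P.1, x ∈ dCube d P'.1 →
      dCube d P'.1 ⊂ dCube d P.1 ∨ dCube d P.1 ⊂ dCube d P'.1 := by
    intro P P' hne x hx hx'
    have hne' : dCube d P.1 ≠ dCube d P'.1 := fun h => hne (Subtype.ext (dCube_injective hd h))
    rcases dCube_subset_or_subset hx hx' with h | h
    · exact Or.inr (h.ssubset_of_ne hne')
    · exact Or.inl (h.ssubset_of_ne hne'.symm)
  have hHd : Pairwise fun P P' => Disjoint (H P) (H P') := by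
    intro P P' hne
    by_contra hnd
    obtain ⟨x, hx, hx'⟩ := Set.not_disjoint_iff.1 hnd
    rcases ssubset_or P P' hne x (hGsub _ hx.1) (hGsub _ hx'.1) with h | h
    · exact hnd (disjoint_of_ssubset P P' h)
    · exact hnd (disjoint_of_ssubset P' P h).symm
  set T : {R // R ∈ S} → {P // P ∈ S'} → Set (Fin d → ℝ) :=
    fun R P => {x | IsMaxCube (A P) R.1 ∧ x ∈ dCube d R.1 ∩ G P} with hT
  have hTm : ∀ R P, MeasurableSet (T R P) := fun R P =>
    (MeasurableSet.const _).inter ((measurableSet_dCube _).inter (hGm _))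
  have not_mem_of_ssubset : ∀ (R : {R // R ∈ S}) (P P' : {P // P ∈ S'}),
      dCube d P'.1 ⊂ dCube d P.1 → ∀ x ∈ T R P, x ∉ T R P' := by
    intro R P P' h x hx hx'
    obtain ⟨Q, hP'Q, hQP, hQ⟩ := hnest P P.2 P' P'.2 h
    have hRP' : dCube d R.1 ⊂ dCube d P'.1 := hx'.1.1.2
    rcases hQ with hQ | hQ
    · have := hx.1.2 Q ⟨hQ, hQP⟩ (hRP'.subset.trans hP'Q)
      exact hRP'.not_subset (this ▸ hP'Q)
    · exact Set.disjoint_left.1 hQ (hP'Q (hGsub _ hx'.2.2)) hx.2.2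
  have hTd : ∀ R, Pairwise fun P P' => Disjoint (T R P) (T R P') := by
    intro R P P' hne
    refine Set.disjoint_left.2 fun x hx hx' => ?_
    rcases ssubset_or P P' hne x (hGsub _ hx.2.2) (hGsub _ hx'.2.2) with h | h
    · exact not_mem_of_ssubset R P P' h x hx hx'
    · exact not_mem_of_ssubset R P' P h x hx' hx
  set c := ENNReal.ofReal (η / (1 + η)) with hc
  set c' := ENNReal.ofReal (1 / (1 + η)) with hc'
  have hcc' : c + c' = 1 := by
    rw [hc, hc', ← ENNReal.ofReal_add (by positivity) (by positivity), ← ENNReal.ofReal_one]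
    congr 1
    field_simp
    ring
  have hc'η : c = c' * ENNReal.ofReal η := by
    rw [hc, hc', ← ENNReal.ofReal_mul (by positivity)]
    congr 1
    field_simp
  have hEfin : ∀ R, volume (E R) ≠ ∞ := fun R =>
    measure_ne_top_of_subset (hEsub R) (volume_dCube_ne_top _)
  obtain ⟨V, hVm, hVH, hVE⟩ := exists_measurableSet_proportion hd hEm hHm hEfin
    (fun i j h => hEd i j h) hHd hcc'
  have hsum : ∀ R, ∑' P, c * volume (T R P) ≤ volume (E R \ V) := by
    intro R
    calc ∑' P, c * volume (T R P) = c * volume (⋃ P, T R P) := by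
          rw [ENNReal.tsum_mul_left, measure_iUnion (hTd R) (hTm R)]
      _ ≤ c * volume (dCube d R.1) := by
          gcongr
          exact Set.iUnion_subset fun P x hx => hx.2.1
      _ ≤ c' * volume (E R) := by
          rw [hc'η, mul_assoc]
          gcongr
          exact hEv R
      _ ≤ _ := hVE R
  have hYex := fun R => exists_disjoint_subsets_volume_eq hd ((hEm R).diff hVm)
    (measure_ne_top_of_subset Set.sdiff_subset (hEfin R)) _ (hsum R)
  choose Y hYm hYsub hYd hYv using hYex
  set Z : {R // R ∈ S} → {P // P ∈ S'} → Set (Fin d → ℝ) :=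
    fun R P => {x | IsMaxCube (A P) R.1 ∧ x ∈ Y R P} with hZ
  have hZm : ∀ R P, MeasurableSet (Z R P) := fun R P => (MeasurableSet.const _).inter (hYm R P)
  have hZv : ∀ R P, volume (Z R P) = c * volume (T R P) := by
    intro R P
    by_cases h : IsMaxCube (A P) R.1
    · simp only [hZ, h, true_and]
      exact hYv R P
    · simp [hZ, hT, h]
  have hVZ : ∀ R P P', Disjoint (H P ∩ V) (Z R P') := fun R P P' =>
    Set.disjoint_left.2 fun x hx hx' => (hYsub R P' hx'.2).2 hx.2
  refine ⟨fun P => (H P ∩ V) ∪ ⋃ R, Z R P,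
    fun P => ((hHm P).inter hVm).union (.iUnion fun R => hZm R P), fun P => ?_,
    fun P P' hne => ?_, fun P => ?_⟩
  · rintro x (hx | hx)
    · exact hGsub _ hx.1.1
    · obtain ⟨R, hR⟩ := Set.mem_iUnion.1 hx
      exact hR.1.1.2.subset (hEsub R (hYsub R P hR.2).1)
  · rw [Set.disjoint_union_left, Set.disjoint_union_right, Set.disjoint_union_right]
    refine ⟨⟨(hHd hne).mono Set.inter_subset_left Set.inter_subset_left, ?_⟩, ?_, ?_⟩
    · exact Set.disjoint_iUnion_right.2 fun R => hVZ R P P'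
    · exact Set.disjoint_iUnion_left.2 fun R => (hVZ R P' P).symm
    · refine Set.disjoint_iUnion_left.2 fun R => Set.disjoint_iUnion_right.2 fun R' => ?_
      by_cases h : R = R'
      · subst h
        exact (hYd R hne).mono (fun x hx => hx.2) fun x hx => hx.2
      · exact (hEd R R' h).mono (fun x hx => (hYsub R P hx.2).1) fun x hx => (hYsub R' P' hx.2).1
  · have hhalf : ENNReal.ofReal (η / (2 * (1 + η))) * 2 = c := by
      rw [hc, ← ENNReal.ofReal_ofNat 2, ← ENNReal.ofReal_mul (by positivity)]
      congr 1
      field_simp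
    have hcover : G P ⊆ H P ∪ ⋃ R, T R P := by
      intro x hx
      by_cases h : x ∈ ⋃ R ∈ A P, dCube d R
      · obtain ⟨R, hR, hxR⟩ := Set.mem_iUnion₂.1 h
        obtain ⟨M, hM, hRM⟩ := exists_isMaxCube_superset hd (A := A P) (m := P.1.1)
          (fun R hR => generation_le_of_subset hd hR.2.subset) hR
        exact Or.inr (Set.mem_iUnion.2 ⟨⟨M, hM.1.1⟩, hM, hRM hxR, hx⟩)
      · exact Or.inl ⟨hx, h⟩
    calc ENNReal.ofReal (η / (2 * (1 + η))) * volume (dCube d P.1)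
        ≤ ENNReal.ofReal (η / (2 * (1 + η))) * (2 * volume (G P)) := by
          gcongr
          exact hGv P
      _ = c * volume (G P) := by rw [← mul_assoc, hhalf]
      _ ≤ c * (volume (H P) + ∑' R, volume (T R P)) := by
          gcongr
          exact (measure_mono hcover).trans
            ((measure_union_le _ _).trans (by gcongr; exact measure_iUnion_le _))
      _ = c * volume (H P) + ∑' R, volume (Z R P) := by
          rw [mul_add, ← ENNReal.tsum_mul_left]
          simp only [hZv]
      _ ≤ volume (H P ∩ V) + ∑' R, volume (Z R P) := by
          gcongr
          exact hVH P
      _ = _ := by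
          rw [measure_union (Set.disjoint_iUnion_right.2 fun R => hVZ R P P)
            (.iUnion fun R => hZm R P), measure_iUnion _ fun R => hZm R P]
          exact fun R R' h => (hEd R R' h).mono (fun x hx => (hYsub R P hx.2).1)
            fun x hx => (hYsub R' P hx.2).1

end Sparse

section StoppingFamily

variable {d : ℕ}

/-- The mean deviation over the cube `R` of `b` from its average over the cube `P`. For `R = P`
this is the mean oscillation of `b` over `P`. -/
def meanDev (b : (Fin d → ℝ) → ℝ) (P R : ℤ × (Fin d → ℤ)) : ℝ :=
  avg (dCube d R) fun y => |b y - avg (dCube d P) b|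

/-- The cubes strictly inside `P` on which `b` deviates from its average over `P` by more than
twice its mean oscillation over `P`. -/
def largeDev (b : (Fin d → ℝ) → ℝ) (P : ℤ × (Fin d → ℤ)) : Set (ℤ × (Fin d → ℤ)) :=
  {R | dCube d R ⊂ dCube d P ∧ 2 * meanDev b P P < meanDev b P R}

/-- The stopping cubes of `P`: those strictly inside `P` which belong to `S` or on which `b` has
a large deviation. -/
def stopping (S : Set (ℤ × (Fin d → ℤ))) (b : (Fin d → ℝ) → ℝ) (P : ℤ × (Fin d → ℤ)) :
    Set (ℤ × (Fin d → ℤ)) :=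
  {R | dCube d R ⊂ dCube d P ∧ R ∈ S} ∪ largeDev b P

/-- The smallest family containing `S` and, with each `P`, the maximal stopping cubes of `P`. -/
inductive StoppingFamily (S : Set (ℤ × (Fin d → ℤ))) (b : (Fin d → ℝ) → ℝ) :
    ℤ × (Fin d → ℤ) → Prop
  | base {P : ℤ × (Fin d → ℤ)} : P ∈ S → StoppingFamily S b P
  | step {P R : ℤ × (Fin d → ℤ)} : StoppingFamily S b P → IsMaxCube (stopping S b P) R →
      StoppingFamily S b R

variable {S : Set (ℤ × (Fin d → ℤ))} {b : (Fin d → ℝ) → ℝ}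

lemma ssubset_of_mem_stopping {P R : ℤ × (Fin d → ℤ)} (h : R ∈ stopping S b P) :
    dCube d R ⊂ dCube d P :=
  h.elim (fun h => h.1) fun h => h.1

lemma exists_isMaxCube_stopping (hd : 1 ≤ d) {P R : ℤ × (Fin d → ℤ)} (h : R ∈ stopping S b P) :
    ∃ M, IsMaxCube (stopping S b P) M ∧ dCube d R ⊆ dCube d M :=
  exists_isMaxCube_superset hd (m := P.1)
    (fun _ hR => generation_le_of_subset hd (ssubset_of_mem_stopping hR).subset) h

lemma StoppingFamily.exists_isMaxCube (hd : 1 ≤ d) {P P' : ℤ × (Fin d → ℤ)}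
    (hP : StoppingFamily S b P) (hP' : StoppingFamily S b P') :
    (dCube d P' ⊂ dCube d P → ∃ M, IsMaxCube (stopping S b P) M ∧ dCube d P' ⊆ dCube d M) ∧
    (dCube d P ⊂ dCube d P' → ∃ M, IsMaxCube (stopping S b P') M ∧ dCube d P ⊆ dCube d M) := by
  have nested : ∀ {A B C : ℤ × (Fin d → ℤ)}, dCube d C ⊆ dCube d A → dCube d C ⊆ dCube d B →
      A = B ∨ dCube d A ⊂ dCube d B ∨ dCube d B ⊂ dCube d A := by
    intro A B C hA hB
    obtain ⟨x, hx⟩ := dCube_nonempty C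
    by_cases hAB : A = B
    · exact Or.inl hAB
    have hne : dCube d A ≠ dCube d B := fun h => hAB (dCube_injective hd h)
    rcases dCube_subset_or_subset (hA hx) (hB hx) with h | h
    · exact Or.inr (Or.inl (h.ssubset_of_ne hne))
    · exact Or.inr (Or.inr (h.ssubset_of_ne hne.symm))
  have descend : ∀ {A B C : ℤ × (Fin d → ℤ)}, IsMaxCube (stopping S b A) B →
      ((dCube d A ⊂ dCube d C → ∃ M, IsMaxCube (stopping S b C) M ∧ dCube d A ⊆ dCube d M) ∧
      (dCube d C ⊂ dCube d A → ∃ M, IsMaxCube (stopping S b A) M ∧ dCube d C ⊆ dCube d M)) →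
      dCube d B ⊂ dCube d C → ∃ M, IsMaxCube (stopping S b C) M ∧ dCube d B ⊆ dCube d M := by
    intro A B C hAB ih hBC
    have hBA := ssubset_of_mem_stopping hAB.1
    rcases nested hBA.subset hBC.subset with rfl | h | h
    · exact ⟨B, hAB, subset_rfl⟩
    · obtain ⟨M, hM, hAM⟩ := ih.1 h
      exact ⟨M, hM, hBA.subset.trans hAM⟩
    · obtain ⟨M, hM, hCM⟩ := ih.2 h
      have := hAB.2 M hM.1 (hBC.subset.trans hCM)
      exact absurd (this ▸ hCM) hBC.not_subset
  induction hP generalizing P' with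
  | @base P hPS =>
    induction hP' with
    | base hPS' =>
      exact ⟨fun h => exists_isMaxCube_stopping hd (Or.inl ⟨h, hPS'⟩),
        fun h => exists_isMaxCube_stopping hd (Or.inl ⟨h, hPS⟩)⟩
    | step _ hR ih =>
      exact ⟨descend hR ih, fun h => exists_isMaxCube_stopping hd (Or.inl ⟨h, hPS⟩)⟩
  | step hP hR ih =>
    have ih_right : ∀ {P'}, StoppingFamily S b P' → _ := fun hP' => descend hR (ih hP').symm
    induction hP' with
    | base hPS' =>
      exact ⟨fun h => exists_isMaxCube_stopping hd (Or.inl ⟨h, hPS'⟩),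
        ih_right (.base hPS')⟩
    | step hP' hR' ih' => exact ⟨descend hR' ih', ih_right (.step hP' hR')⟩

end StoppingFamily

section MeanDeviation

variable {d : ℕ} {b : (Fin d → ℝ) → ℝ}

lemma integrableOn_abs_sub_const (hb : LocallyIntegrable b volume) (a : ℝ)
    (R : ℤ × (Fin d → ℤ)) : IntegrableOn (fun y => |b y - a|) (dCube d R) volume :=
  ((hb.integrableOn_dCube R).sub (integrableOn_const (volume_dCube_ne_top R))).abs

lemma meanDev_nonneg (P R : ℤ × (Fin d → ℤ)) : 0 ≤ meanDev b P R :=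
  mul_nonneg (by positivity) (integral_nonneg fun _ => abs_nonneg _)

lemma meanDev_mul_volume (P R : ℤ × (Fin d → ℤ)) :
    meanDev b P R * (volume (dCube d R)).toReal = ∫ y in dCube d R, |b y - avg (dCube d P) b| := by
  have := (volume_dCube_toReal_pos R).ne'
  rw [meanDev, avg]
  field_simp

lemma ofReal_meanDev_mul_volume (hb : LocallyIntegrable b volume) (P R : ℤ × (Fin d → ℤ)) :
    ENNReal.ofReal (meanDev b P R) * volume (dCube d R) =
      ∫⁻ y in dCube d R, ENNReal.ofReal |b y - avg (dCube d P) b| := by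
  rw [← ofReal_integral_eq_lintegral_ofReal (integrableOn_abs_sub_const hb _ R)
    (Filter.Eventually.of_forall fun _ => abs_nonneg _), ← meanDev_mul_volume,
    ENNReal.ofReal_mul (meanDev_nonneg P R), ENNReal.ofReal_toReal (volume_dCube_ne_top R)]

lemma abs_avg_sub_avg_le_meanDev (hb : LocallyIntegrable b volume) (P R : ℤ × (Fin d → ℤ)) :
    |avg (dCube d R) b - avg (dCube d P) b| ≤ meanDev b P R := by
  have hpos := volume_dCube_toReal_pos R
  have heq : avg (dCube d R) b - avg (dCube d P) b =
      (volume (dCube d R)).toReal⁻¹ * ∫ y in dCube d R, (b y - avg (dCube d P) b) := by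
    rw [integral_sub (hb.integrableOn_dCube R) (integrableOn_const (volume_dCube_ne_top R)),
      setIntegral_const, measureReal_def, smul_eq_mul, mul_sub, inv_mul_cancel_left₀ hpos.ne',
      avg]
  rw [heq, abs_mul, abs_of_pos (inv_pos.2 hpos), meanDev, avg]
  exact mul_le_mul_of_nonneg_left abs_integral_le_integral_abs (inv_pos.2 hpos).le

lemma meanDev_le_of_subset (hb : LocallyIntegrable b volume) {P R R' : ℤ × (Fin d → ℤ)}
    (h : dCube d R ⊆ dCube d R') (hgen : R'.1 = R.1 - 1) :
    meanDev b P R ≤ 2 ^ d * meanDev b P R' := by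
  have hpos := volume_dCube_toReal_pos R
  have hvol : (volume (dCube d R')).toReal = 2 ^ d * (volume (dCube d R)).toReal := by
    rw [volume_dCube_toReal, volume_dCube_toReal, hgen, ← mul_pow, neg_sub, sub_eq_add_neg,
      zpow_add₀ two_ne_zero, zpow_one]
  have hmono : meanDev b P R * (volume (dCube d R)).toReal ≤
      meanDev b P R' * (volume (dCube d R')).toReal := by
    rw [meanDev_mul_volume, meanDev_mul_volume]
    exact setIntegral_mono_set (integrableOn_abs_sub_const hb _ R')
      (Filter.Eventually.of_forall fun _ => abs_nonneg _) h.eventuallyLE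
  rw [hvol] at hmono
  refine le_of_mul_le_mul_right ?_ hpos
  linarith

lemma IsMaxCube.meanDev_le (hd : 1 ≤ d) (hb : LocallyIntegrable b volume)
    {S : Set (ℤ × (Fin d → ℤ))} {P R : ℤ × (Fin d → ℤ)} (hR : IsMaxCube (stopping S b P) R) :
    meanDev b P R ≤ 2 ^ (d + 1) * meanDev b P P := by
  obtain ⟨x, hx⟩ := dCube_nonempty R
  have hRP := ssubset_of_mem_stopping hR.1
  set R' := cubeAt x (R.1 - 1) with hR'
  have hx' : x ∈ dCube d R' := mem_cubeAt x _
  have hgen : R'.1 = R.1 - 1 := rfl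
  have hRR' : dCube d R ⊆ dCube d R' := dCube_subset_of_mem hx hx' (by lia)
  have hR'P : dCube d R' ⊆ dCube d P := by
    refine dCube_subset_of_mem hx' (hRP.subset hx) ?_
    have := generation_lt_of_ssubset hd hRP
    lia
  have hnot : meanDev b P R' ≤ 2 * meanDev b P P := by
    have h0 := meanDev_nonneg (b := b) P P
    by_cases heq : R' = P
    · rw [heq]
      linarith
    · by_contra! hlt
      have := hR.2 R' (Or.inr
        ⟨hR'P.ssubset_of_ne fun h => heq (dCube_injective hd h), hlt⟩) hRR'
      rw [this] at hgen
      lia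
  calc meanDev b P R ≤ 2 ^ d * meanDev b P R' := meanDev_le_of_subset hb hRR' hgen
    _ ≤ 2 ^ d * (2 * meanDev b P P) := by gcongr
    _ = _ := by ring

/-- The part of `P` not covered by the cubes on which `b` has a large deviation. -/
def smallDevPart (b : (Fin d → ℝ) → ℝ) (P : ℤ × (Fin d → ℤ)) : Set (Fin d → ℝ) :=
  dCube d P \ ⋃ R ∈ largeDev b P, dCube d R

lemma volume_le_two_mul_volume_smallDevPart (hd : 1 ≤ d) (hb : LocallyIntegrable b volume)
    (P : ℤ × (Fin d → ℤ)) : volume (dCube d P) ≤ 2 * volume (smallDevPart b P) := by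
  set U := ⋃ R ∈ largeDev b P, dCube d R with hU
  have hUm : MeasurableSet U :=
    .biUnion (Set.to_countable _) fun R _ => measurableSet_dCube R
  have hUP : U ⊆ dCube d P := Set.iUnion₂_subset fun R hR => hR.1.subset
  set Ω := meanDev b P P with hΩ
  have hUM : U = ⋃ R : {R // IsMaxCube (largeDev b P) R}, dCube d R.1 := by
    refine Set.Subset.antisymm (Set.iUnion₂_subset fun R hR => ?_)
      (Set.iUnion_subset fun R => Set.subset_biUnion_of_mem (u := fun R => dCube d R) R.2.1)
    obtain ⟨M, hM, hRM⟩ := exists_isMaxCube_superset hd (A := largeDev b P) (m := P.1)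
      (fun R hR => generation_le_of_subset hd hR.1.subset) hR
    exact hRM.trans (Set.subset_iUnion
      (fun R : {R // IsMaxCube (largeDev b P) R} => dCube d R.1) ⟨M, hM⟩)
  have hdisj : Pairwise fun R R' : {R // IsMaxCube (largeDev b P) R} =>
      Disjoint (dCube d R.1) (dCube d R'.1) := fun R R' h =>
    R.2.disjoint R'.2 fun h' => h (Subtype.ext h')
  have hdev : ENNReal.ofReal (2 * Ω) * volume U ≤ ENNReal.ofReal Ω * volume (dCube d P) := by
    calc ENNReal.ofReal (2 * Ω) * volume U
        = ∑' R : {R // IsMaxCube (largeDev b P) R},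
            ENNReal.ofReal (2 * Ω) * volume (dCube d R.1) := by
          rw [hUM, measure_iUnion hdisj fun R => measurableSet_dCube _, ENNReal.tsum_mul_left]
      _ ≤ ∑' R : {R // IsMaxCube (largeDev b P) R},
            ∫⁻ y in dCube d R.1, ENNReal.ofReal |b y - avg (dCube d P) b| := by
          refine ENNReal.tsum_le_tsum fun R => ?_
          rw [← ofReal_meanDev_mul_volume hb]
          gcongr
          exact R.2.1.2.le
      _ = ∫⁻ y in U, ENNReal.ofReal |b y - avg (dCube d P) b| := by
          rw [hUM, lintegral_iUnion (fun R => measurableSet_dCube _) hdisj]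
      _ ≤ ∫⁻ y in dCube d P, ENNReal.ofReal |b y - avg (dCube d P) b| :=
          lintegral_mono_set hUP
      _ = _ := (ofReal_meanDev_mul_volume hb P P).symm
  have hhalf : 2 * volume U ≤ volume (dCube d P) := by
    rcases (meanDev_nonneg (b := b) P P).eq_or_lt with h0 | hpos
    · have hempty : U = ∅ := by
        refine Set.eq_empty_of_forall_notMem fun x hx => ?_
        obtain ⟨R, hR, -⟩ := Set.mem_iUnion₂.1 hx
        have hlt : 0 < meanDev b P R := by
          have := hR.2
          rwa [← h0, mul_zero] at this
        have hle := lintegral_mono_set (μ := volume)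
          (f := fun y => ENNReal.ofReal |b y - avg (dCube d P) b|) hR.1.subset
        rw [← ofReal_meanDev_mul_volume hb, ← ofReal_meanDev_mul_volume hb, ← h0,
          ENNReal.ofReal_zero, zero_mul, nonpos_iff_eq_zero, mul_eq_zero,
          ENNReal.ofReal_eq_zero] at hle
        rcases hle with h | h
        · exact hlt.not_ge h
        · exact (volume_dCube_toReal_pos R).ne' (by rw [h, ENNReal.toReal_zero])
      simp [hempty]
    · rw [ENNReal.ofReal_mul two_pos.le, ENNReal.ofReal_ofNat, mul_comm 2, mul_assoc] at hdev
      exact (ENNReal.mul_le_mul_iff_right (ENNReal.ofReal_pos.2 hpos).ne'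
        ENNReal.ofReal_ne_top).1 hdev
  have hadd : volume (dCube d P) = volume (smallDevPart b P) + volume U := by
    rw [smallDevPart, ← hU, add_comm, measure_add_sdiff hUm.nullMeasurableSet,
      Set.union_eq_right.2 hUP]
  have h2 : volume (dCube d P) + volume (dCube d P) ≤
      2 * volume (smallDevPart b P) + volume (dCube d P) := by
    calc volume (dCube d P) + volume (dCube d P)
        = 2 * volume (smallDevPart b P) + 2 * volume U := by
          rw [hadd]
          ring
      _ ≤ _ := by gcongr
  exact (ENNReal.add_le_add_iff_right (volume_dCube_ne_top P)).1 h2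

lemma dCube_ae_eq_closedBall (q : ℤ × (Fin d → ℤ)) :
    dCube d q =ᵐ[volume] Metric.closedBall
      (fun i => ((q.2 i : ℝ) + 1 / 2) * (2 : ℝ) ^ (-q.1)) ((2 : ℝ) ^ (-q.1) / 2) := by
  have hball : Metric.closedBall
      (fun i => ((q.2 i : ℝ) + 1 / 2) * (2 : ℝ) ^ (-q.1)) ((2 : ℝ) ^ (-q.1) / 2) =
      Set.Icc (fun i => (q.2 i : ℝ) * (2 : ℝ) ^ (-q.1))
        (fun i => ((q.2 i : ℝ) + 1) * (2 : ℝ) ^ (-q.1)) := by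
    rw [closedBall_pi _ (by positivity), ← Set.pi_univ_Icc]
    refine Set.pi_congr rfl fun i _ => ?_
    rw [Real.closedBall_eq_Icc]
    congr 1 <;> ring
  rw [hball, dCube_eq_pi]
  exact Measure.univ_pi_Ico_ae_eq_Icc

/-- The Lebesgue differentiation theorem along dyadic cubes. -/
lemma ae_tendsto_avg_cubeAt (hb : LocallyIntegrable b volume) :
    ∀ᵐ x, Filter.Tendsto (fun n : ℕ => avg (dCube d (cubeAt x n)) b) Filter.atTop
      (nhds (b x)) := by
  filter_upwards [IsUnifLocDoublingMeasure.ae_tendsto_average volume hb 1] with x hx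
  have hlim : Filter.Tendsto (fun n : ℕ => (2 : ℝ) ^ (-(n : ℤ)) / 2) Filter.atTop
      (nhdsWithin 0 (Set.Ioi 0)) := by
    refine tendsto_nhdsWithin_iff.2 ⟨?_, Filter.Eventually.of_forall fun n => ?_⟩
    · have := (tendsto_pow_atTop_nhds_zero_of_lt_one (r := (1 / 2 : ℝ)) (by norm_num)
        (by norm_num)).div_const 2
      simpa using this
    · exact Set.mem_Ioi.2 (by positivity)
  have := hx (fun n : ℕ => fun i => (((cubeAt x n).2 i : ℝ) + 1 / 2) * (2 : ℝ) ^ (-(n : ℤ))) _ hlim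
    (Filter.Eventually.of_forall fun n => by
      rw [one_mul, closedBall_pi _ (by positivity)]
      have hmem := mem_cubeAt x n
      intro i _
      beta_reduce
      rw [Real.closedBall_eq_Icc]
      have hi := hmem i
      simp only [cubeAt] at hi ⊢
      constructor <;> linarith [hi.1, hi.2])
  refine this.congr fun n => ?_
  exact (setAverage_congr (dCube_ae_eq_closedBall (cubeAt x n))).symm.trans (setAverage_eq ..)

end MeanDeviation

section Pointwise

variable {d : ℕ} {b : (Fin d → ℝ) → ℝ} {S : Set (ℤ × (Fin d → ℤ))}

/-- The sum, over the cubes `R ⊆ Q` of the stopping family, of the mean oscillations of `b`. -/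
def oscSum (S : Set (ℤ × (Fin d → ℤ))) (b : (Fin d → ℝ) → ℝ) (x : Fin d → ℝ)
    (Q : ℤ × (Fin d → ℤ)) : ℝ≥0∞ :=
  ∑' r : {r // r ∈ {r | StoppingFamily S b r} ∧ dCube d r ⊆ dCube d Q},
    ENNReal.ofReal (meanDev b r.1 r.1) * (dCube d r.1).indicator (fun _ => (1 : ℝ≥0∞)) x

lemma ofReal_meanDev_le_oscSum {Q : ℤ × (Fin d → ℤ)} (hQ : StoppingFamily S b Q)
    {x : Fin d → ℝ} (hx : x ∈ dCube d Q) : ENNReal.ofReal (meanDev b Q Q) ≤ oscSum S b x Q := by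
  refine le_trans ?_ (ENNReal.le_tsum ⟨Q, hQ, subset_rfl⟩)
  simp [hx]

lemma ofReal_meanDev_add_oscSum_le {Q R : ℤ × (Fin d → ℤ)} (hQ : StoppingFamily S b Q)
    (hRQ : dCube d R ⊂ dCube d Q) {x : Fin d → ℝ} (hx : x ∈ dCube d Q) :
    ENNReal.ofReal (meanDev b Q Q) + oscSum S b x R ≤ oscSum S b x Q := by
  let f : ℤ × (Fin d → ℤ) → ℝ≥0∞ := fun r =>
    ENNReal.ofReal (meanDev b r r) * (dCube d r).indicator (fun _ => (1 : ℝ≥0∞)) x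
  let F : ℤ × (Fin d → ℤ) → Set (ℤ × (Fin d → ℤ)) := fun Q =>
    {r | r ∈ {r | StoppingFamily S b r} ∧ dCube d r ⊆ dCube d Q}
  have hQR : Disjoint {Q} (F R) := Set.disjoint_singleton_left.2 fun h => hRQ.not_subset h.2
  calc ENNReal.ofReal (meanDev b Q Q) + oscSum S b x R
      = ∑' r : ({Q} : Set (ℤ × (Fin d → ℤ))), f r + ∑' r : F R, f r := by
        rw [tsum_singleton Q f]
        congr 1
        simp [f, hx]
    _ = ∑' r : ({Q} ∪ F R : Set (ℤ × (Fin d → ℤ))), f r :=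
        (ENNReal.summable.tsum_union_disjoint hQR ENNReal.summable).symm
    _ ≤ ∑' r : F Q, f r := by
        refine ENNReal.tsum_mono_subtype f (Set.union_subset ?_ fun r hr => ?_)
        · exact Set.singleton_subset_iff.2 ⟨hQ, subset_rfl⟩
        · exact ⟨hr.1, hr.2.trans hRQ.subset⟩

lemma ofReal_abs_avg_sub_avg_le (hd : 1 ≤ d) (hb : LocallyIntegrable b volume)
    {Q C : ℤ × (Fin d → ℤ)} (hQ : StoppingFamily S b Q) {x : Fin d → ℝ} (hx : x ∈ dCube d C)
    (hCQ : dCube d C ⊆ dCube d Q) :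
    ENNReal.ofReal |avg (dCube d C) b - avg (dCube d Q) b| ≤ 2 ^ (d + 1) * oscSum S b x Q := by
  induction hn : (C.1 - Q.1).toNat using Nat.strong_induction_on generalizing Q with
  | _ n ih =>
  have hofReal : ENNReal.ofReal (2 ^ (d + 1)) = 2 ^ (d + 1) := by
    rw [ENNReal.ofReal_pow two_pos.le, ENNReal.ofReal_ofNat]
  have hQ0 := meanDev_nonneg (b := b) Q Q
  by_cases hcontained : ∃ R ∈ stopping S b Q, dCube d C ⊆ dCube d R
  · obtain ⟨R, hR, hCR⟩ := hcontained
    obtain ⟨M, hM, hRM⟩ := exists_isMaxCube_stopping hd hR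
    have hMQ := ssubset_of_mem_stopping hM.1
    have hCM := hCR.trans hRM
    have hlt := generation_lt_of_ssubset hd hMQ
    have hle := generation_le_of_subset hd hCM
    have hrec := ih _ (by lia) (hQ.step hM) hCM rfl
    calc ENNReal.ofReal |avg (dCube d C) b - avg (dCube d Q) b|
        ≤ ENNReal.ofReal (2 ^ (d + 1) * meanDev b Q Q +
            |avg (dCube d C) b - avg (dCube d M) b|) := by
          refine ENNReal.ofReal_le_ofReal ?_
          have h1 := abs_sub_le (avg (dCube d C) b) (avg (dCube d M) b) (avg (dCube d Q) b)
          have h2 := (abs_avg_sub_avg_le_meanDev hb Q M).trans (hM.meanDev_le hd hb)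
          linarith
      _ = 2 ^ (d + 1) * ENNReal.ofReal (meanDev b Q Q) +
            ENNReal.ofReal |avg (dCube d C) b - avg (dCube d M) b| := by
          rw [ENNReal.ofReal_add (by positivity) (abs_nonneg _),
            ENNReal.ofReal_mul (by positivity), hofReal]
      _ ≤ 2 ^ (d + 1) * (ENNReal.ofReal (meanDev b Q Q) + oscSum S b x M) := by
          rw [mul_add]
          gcongr
      _ ≤ _ := by
          gcongr
          exact ofReal_meanDev_add_oscSum_le hQ hMQ (hCQ hx)
  · have hC : meanDev b Q C ≤ 2 * meanDev b Q Q := by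
      by_cases heq : C = Q
      · rw [heq]
        linarith
      · by_contra! hlt
        exact hcontained ⟨C, Or.inr ⟨hCQ.ssubset_of_ne fun h => heq (dCube_injective hd h), hlt⟩,
          subset_rfl⟩
    calc ENNReal.ofReal |avg (dCube d C) b - avg (dCube d Q) b|
        ≤ ENNReal.ofReal (2 ^ (d + 1) * meanDev b Q Q) := by
          refine ENNReal.ofReal_le_ofReal
            ((abs_avg_sub_avg_le_meanDev hb Q C).trans (hC.trans ?_))
          gcongr
          exact le_self_pow₀ one_le_two (by lia)
      _ = 2 ^ (d + 1) * ENNReal.ofReal (meanDev b Q Q) := by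
          rw [ENNReal.ofReal_mul (by positivity), hofReal]
      _ ≤ _ := by
          gcongr
          exact ofReal_meanDev_le_oscSum hQ (hCQ hx)

lemma StoppingFamily.ae_ofReal_abs_sub_avg_le (hd : 1 ≤ d) (hb : LocallyIntegrable b volume)
    {Q : ℤ × (Fin d → ℤ)} (hQ : StoppingFamily S b Q) :
    ∀ᵐ x ∂(volume.restrict (dCube d Q)),
      ENNReal.ofReal |b x - avg (dCube d Q) b| ≤ 2 ^ (d + 1) * oscSum S b x Q := by
  filter_upwards [ae_restrict_of_ae (ae_tendsto_avg_cubeAt hb),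
    ae_restrict_mem (measurableSet_dCube Q)] with x hlim hx
  refine le_of_tendsto (ENNReal.tendsto_ofReal (hlim.sub_const _).abs) ?_
  filter_upwards [Filter.eventually_ge_atTop Q.1.toNat] with n hn
  have hmem := mem_cubeAt x n
  exact ofReal_abs_avg_sub_avg_le hd hb hQ hmem
    (dCube_subset_of_mem hmem hx (by simp only [cubeAt]; lia))

end Pointwise

/-- **Lerner–Ombrosi–Rivera-Ríos key lemma.** Every `η`-sparse family `S`
of standard dyadic cubes can be enlarged to an `η/(2(1+η))`-sparse family `S̃ ⊇ S` such
that for every `Q ∈ S̃` and a.e. `x ∈ Q`,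
`|b(x) - ⟨b⟩_Q| ≤ 2^{d+2} ∑_{R∈S̃, R⊆Q} Ω(b;R) 1_R(x)`. -/
theorem lerner_ombrosi_riveraRios_key_lemma (d : ℕ) (hd : 1 ≤ d)
    (η : ℝ) (hη : 0 < η) (hη1 : η < 1)
    (S : Set (ℤ × (Fin d → ℤ))) (hS : IsSparse d η S)
    (b : (Fin d → ℝ) → ℝ) (hb : MeasureTheory.LocallyIntegrable b volume) :
    ∃ S' : Set (ℤ × (Fin d → ℤ)), S ⊆ S' ∧ IsSparse d (η / (2 * (1 + η))) S' ∧
      ∀ q ∈ S', ∀ᵐ x ∂(volume.restrict (dCube d q)),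
        ENNReal.ofReal |b x - avg (dCube d q) b|
          ≤ 2 ^ (d + 2) *
              ∑' r : {r // r ∈ S' ∧ dCube d r ⊆ dCube d q},
                ENNReal.ofReal (avg (dCube d r.1) (fun y => |b y - avg (dCube d r.1) b|)) *
                  (dCube d r.1).indicator (fun _ => (1 : ℝ≥0∞)) x := by
  refine ⟨{r | StoppingFamily S b r}, fun q hq => .base hq, ?_, fun q hq => ?_⟩
  · refine hS.of_nested hd hη (G := smallDevPart b)
      (fun P => (measurableSet_dCube P).diff
        (.biUnion (Set.to_countable _) fun R _ => measurableSet_dCube R))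
      (fun P => Set.sdiff_subset) (volume_le_two_mul_volume_smallDevPart hd hb)
      fun P hP P' hP' hlt => ?_
    obtain ⟨M, hM, hP'M⟩ := (StoppingFamily.exists_isMaxCube hd hP hP').1 hlt
    refine ⟨M, hP'M, ssubset_of_mem_stopping hM.1, hM.1.imp (fun h => h.2) fun h => ?_⟩
    exact Set.disjoint_left.2 fun x hx hx' => hx'.2 (Set.mem_biUnion h hx)
  · filter_upwards [StoppingFamily.ae_ofReal_abs_sub_avg_le hd hb hq] with x hx
    refine hx.trans ?_
    change _ ≤ 2 ^ (d + 2) * oscSum S b x q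
    gcongr
    · exact one_le_two
    · lia

end
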